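/- Let Ω ⊆ ℝ² be open, f : Ω → ℝ a C² function, and σ = (x, y) : (a, b) → Ω a C² curve such that for all t ∈ (a,b): f(x(t), y(t)) = t, x'(t)² + y'(t)² = 1, and B(x(t), y(t)) = 0, where B := 1 − f_x² − f_y². Then for all t ∈ (a,b): x'(t) = f_x(x(t), y(t)), y'(t) = f_y(x(t), y(t)), and (x''(t), y''(t)) = −(1/2) (B_x(x(t),y(t)), B_y(x(t),y(t))). In particular, the null curve t ↦ (t, x(t), y(t)) in ℝ³₁ is non-degenerate at t if and only if ∇B(x(t), y(t)) ≠ 0. -/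

import Mathlib

/-!
Along the curve, differentiating `f (σ t) = t` gives `⟨∇f, σ'⟩ = 1`. Since `B ∘ σ = 0` says that
`∇f` is a unit vector on the curve and `σ'` is a unit vector too, the equality case of
Cauchy–Schwarz forces `σ' = ∇f ∘ σ` (`deriv_curve_eq_grad`). Differentiating this once more gives
`σ'' = Hess f · ∇f`, while `∇B = -2 Hess f · ∇f` directly from the definition of `B`
(`fderiv_Bfun`); the two agree up to the factor `-1/2` because the Hessian is symmetric.

The null curve `(t, x, y)` has velocity `(1, x', y')` and acceleration `(0, x'', y'')`, so these are
proportional exactly when the acceleration vanishes, i.e. when `∇B = 0`.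
-/

open Set

/-- Partial derivative in the first (x) direction. -/
noncomputable def pd1 {E : Type*} [NormedAddCommGroup E] [NormedSpace ℝ E]
    (f : ℝ × ℝ → E) (q : ℝ × ℝ) : E := fderiv ℝ f q (1, 0)

/-- Partial derivative in the second (y) direction. -/
noncomputable def pd2 {E : Type*} [NormedAddCommGroup E] [NormedSpace ℝ E]
    (f : ℝ × ℝ → E) (q : ℝ × ℝ) : E := fderiv ℝ f q (0, 1)

/-- B = 1 - f_x^2 - f_y^2. -/
noncomputable def Bfun (f : ℝ × ℝ → ℝ) (q : ℝ × ℝ) : ℝ :=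
  1 - (pd1 f q) ^ 2 - (pd2 f q) ^ 2

lemma clm_pair_apply {E : Type*} [NormedAddCommGroup E] [NormedSpace ℝ E]
    (L : ℝ × ℝ →L[ℝ] E) (u v : ℝ) : L (u, v) = u • L (1, 0) + v • L (0, 1) := by
  rw [← map_smul, ← map_smul, ← map_add]
  simp

/-- The differential of `B`, in terms of the second differential of `f`. -/
lemma fderiv_Bfun {f : ℝ × ℝ → ℝ} {q : ℝ × ℝ} (h : DifferentiableAt ℝ (fderiv ℝ f) q)
    (v : ℝ × ℝ) :
    fderiv ℝ (Bfun f) q v = -2 * (pd1 f q * fderiv ℝ (fderiv ℝ f) q v (1, 0)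
      + pd2 f q * fderiv ℝ (fderiv ℝ f) q v (0, 1)) := by
  have h1 := h.hasFDerivAt.clm_apply (hasFDerivAt_const ((1, 0) : ℝ × ℝ) q)
  have h2 := h.hasFDerivAt.clm_apply (hasFDerivAt_const ((0, 1) : ℝ × ℝ) q)
  have h3 : HasFDerivAt (Bfun f) _ q := ((h1.pow 2).const_sub 1).sub (h2.pow 2)
  rw [h3.fderiv]
  simp [pd1, pd2]
  ring

/-- Equality case of Cauchy–Schwarz: two unit vectors of the plane with inner product `1` agree. -/
lemma eq_of_unit_of_inner_eq_one {p q u v : ℝ} (h1 : p ^ 2 + q ^ 2 = 1) (h2 : u ^ 2 + v ^ 2 = 1)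
    (h3 : u * p + v * q = 1) : u = p ∧ v = q := by
  constructor <;> nlinarith [sq_nonneg (u - p), sq_nonneg (v - q)]

lemma deriv_curve_eq_grad {f : ℝ × ℝ → ℝ} {x y : ℝ → ℝ} {t : ℝ}
    (hf : DifferentiableAt ℝ f (x t, y t)) (hx : DifferentiableAt ℝ x t)
    (hy : DifferentiableAt ℝ y t) (hgraph : ∀ᶠ s in nhds t, f (x s, y s) = s)
    (hunit : (deriv x t) ^ 2 + (deriv y t) ^ 2 = 1) (hB : Bfun f (x t, y t) = 0) :
    deriv x t = pd1 f (x t, y t) ∧ deriv y t = pd2 f (x t, y t) := by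
  have hc : HasDerivAt (fun s => f (x s, y s)) (fderiv ℝ f (x t, y t) (deriv x t, deriv y t)) t :=
    hf.hasFDerivAt.comp_hasDerivAt t (hx.hasDerivAt.prodMk hy.hasDerivAt)
  have h1 := hc.unique ((hasDerivAt_id t).congr_of_eventuallyEq hgraph)
  rw [clm_pair_apply] at h1
  refine eq_of_unit_of_inner_eq_one ?_ hunit h1
  unfold Bfun at hB
  linarith

/-- if a unit-speed C² curve σ = (x,y) in Ω satisfies f(σ(t)) = t and
    B(σ(t)) = 0, then σ' = ∇f ∘ σ, σ'' = -(1/2)∇B ∘ σ, and the null curve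
    t ↦ (t, x(t), y(t)) is non-degenerate at t iff ∇B(σ(t)) ≠ 0. -/
theorem stmt3 (Ω : Set (ℝ × ℝ)) (hΩ : IsOpen Ω) (f : ℝ × ℝ → ℝ)
    (hf : ContDiffOn ℝ 2 f Ω) (a b : ℝ) (x y : ℝ → ℝ)
    (hx : ContDiffOn ℝ 2 x (Ioo a b)) (hy : ContDiffOn ℝ 2 y (Ioo a b))
    (hmem : ∀ t ∈ Ioo a b, (x t, y t) ∈ Ω)
    (hgraph : ∀ t ∈ Ioo a b, f (x t, y t) = t)
    (hunit : ∀ t ∈ Ioo a b, (deriv x t) ^ 2 + (deriv y t) ^ 2 = 1)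
    (hB : ∀ t ∈ Ioo a b, Bfun f (x t, y t) = 0) :
    ∀ t ∈ Ioo a b,
      deriv x t = pd1 f (x t, y t) ∧
      deriv y t = pd2 f (x t, y t) ∧
      (deriv (deriv x) t, deriv (deriv y) t)
        = (-(1 / 2) * pd1 (Bfun f) (x t, y t), -(1 / 2) * pd2 (Bfun f) (x t, y t)) ∧
      ((¬ ∃ c : ℝ, deriv (deriv (fun s => (s, x s, y s))) t
          = c • deriv (fun s => (s, x s, y s)) t)
        ↔ (pd1 (Bfun f) (x t, y t), pd2 (Bfun f) (x t, y t)) ≠ (0, 0)) := by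
  have hf2 : ∀ t ∈ Ioo a b, ContDiffAt ℝ 2 f (x t, y t) := fun t ht =>
    hf.contDiffAt (hΩ.mem_nhds (hmem t ht))
  have hxd : ∀ t ∈ Ioo a b, DifferentiableAt ℝ x t := fun t ht =>
    (hx.contDiffAt (isOpen_Ioo.mem_nhds ht)).differentiableAt (by norm_num)
  have hyd : ∀ t ∈ Ioo a b, DifferentiableAt ℝ y t := fun t ht =>
    (hy.contDiffAt (isOpen_Ioo.mem_nhds ht)).differentiableAt (by norm_num)
  have hfirst : ∀ t ∈ Ioo a b, deriv x t = pd1 f (x t, y t) ∧ deriv y t = pd2 f (x t, y t) :=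
    fun t ht => deriv_curve_eq_grad ((hf2 t ht).differentiableAt (by norm_num)) (hxd t ht)
      (hyd t ht) (Filter.eventually_of_mem (isOpen_Ioo.mem_nhds ht) hgraph) (hunit t ht) (hB t ht)
  intro t ht
  obtain ⟨hx1, hy1⟩ := hfirst t ht
  have hnhds : Ioo a b ∈ nhds t := isOpen_Ioo.mem_nhds ht
  have hD : DifferentiableAt ℝ (fderiv ℝ f) (x t, y t) :=
    ((hf2 t ht).fderiv_right (m := 1) (by norm_num)).differentiableAt (by norm_num)
  have hsymm : fderiv ℝ (fderiv ℝ f) (x t, y t) (0, 1) (1, 0)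
      = fderiv ℝ (fderiv ℝ f) (x t, y t) (1, 0) (0, 1) :=
    (hf2 t ht).isSymmSndFDerivAt (by simp) (0, 1) (1, 0)
  have hcomp : HasDerivAt (fun s => fderiv ℝ f (x s, y s))
      (fderiv ℝ (fderiv ℝ f) (x t, y t) (deriv x t, deriv y t)) t :=
    hD.hasFDerivAt.comp_hasDerivAt t ((hxd t ht).hasDerivAt.prodMk (hyd t ht).hasDerivAt)
  rw [clm_pair_apply] at hcomp
  have hx2 : HasDerivAt (deriv x) (-(1 / 2) * pd1 (Bfun f) (x t, y t)) t := by
    have h := (hcomp.clm_apply (hasDerivAt_const t ((1, 0) : ℝ × ℝ))).congr_of_eventuallyEq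
      (f₁ := deriv x) (Filter.eventually_of_mem hnhds fun s hs => (hfirst s hs).1)
    refine h.congr_deriv ?_
    rw [show pd1 (Bfun f) (x t, y t) = _ from fderiv_Bfun hD _]
    simp [hsymm, hx1, hy1]
  have hy2 : HasDerivAt (deriv y) (-(1 / 2) * pd2 (Bfun f) (x t, y t)) t := by
    have h := (hcomp.clm_apply (hasDerivAt_const t ((0, 1) : ℝ × ℝ))).congr_of_eventuallyEq
      (f₁ := deriv y) (Filter.eventually_of_mem hnhds fun s hs => (hfirst s hs).2)
    refine h.congr_deriv ?_
    rw [show pd2 (Bfun f) (x t, y t) = _ from fderiv_Bfun hD _]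
    simp [hsymm, hx1, hy1]
  have hγ1 : ∀ s ∈ Ioo a b, deriv (fun s => (s, x s, y s)) s = (1, deriv x s, deriv y s) :=
    fun s hs => ((hasDerivAt_id s).prodMk
      ((hxd s hs).hasDerivAt.prodMk (hyd s hs).hasDerivAt)).deriv
  have hγ2 : deriv (deriv (fun s => (s, x s, y s))) t
      = (0, -(1 / 2) * pd1 (Bfun f) (x t, y t), -(1 / 2) * pd2 (Bfun f) (x t, y t)) :=
    (((hasDerivAt_const t (1 : ℝ)).prodMk (hx2.prodMk hy2)).congr_of_eventuallyEq
      (Filter.eventually_of_mem hnhds hγ1)).deriv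
  refine ⟨hx1, hy1, by rw [hx2.deriv, hy2.deriv], ?_⟩
  rw [hγ2, hγ1 t ht, not_iff_not]
  constructor
  · rintro ⟨c, hc⟩
    simp only [Prod.smul_mk, smul_eq_mul, mul_one, Prod.mk.injEq] at hc
    obtain ⟨h0, h1, h2⟩ := hc
    -- the time component `0 = c * 1` kills the factor of proportionality
    subst h0
    rw [Prod.mk.injEq]
    constructor <;> linarith
  · intro h
    rw [Prod.mk.injEq] at h
    exact ⟨0, by simp [h.1, h.2]⟩
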